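/- arXiv:2504.16265 — 9 statements merged into one kernel-verified Lean document; each statement's English description precedes it below -/
import Mathlib

section
/- Let L be a first-order language and let Γ be a finite set of pairs (s,t) of L-terms with variables indexed by Fin v. For each n ≥ 1 define S(n) to be the maximum, over all L-structures M with underlying set Fin n, of the cardinality of the solution set Sol(M) = { a : Fin v → M | for every pair (s,t) ∈ Γ, the realization of s at a equals the realization of t at a }. Then for all integers n₁, n₂ ≥ 1, the maximum solution count is supermultiplicative: S(n₁ · n₂) ≥ S(n₁) · S(n₂). -/
open FirstOrder

/-- The number of solutions of the system of term equations `Γ` (in variables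
indexed by `Fin v`) under a given `L`-structure on `Fin n`. -/
noncomputable def solCount (L : FirstOrder.Language) (v : ℕ)
    (Γ : Finset (L.Term (Fin v) × L.Term (Fin v))) (n : ℕ)
    (M : L.Structure (Fin n)) : ℕ :=
  letI := M
  Nat.card { a : Fin v → Fin n //
    ∀ p ∈ Γ, FirstOrder.Language.Term.realize a p.1 = FirstOrder.Language.Term.realize a p.2 }

/-- The maximum solution count over all `L`-structures on `Fin n`. -/
noncomputable def maxSol (L : FirstOrder.Language) (v : ℕ)
    (Γ : Finset (L.Term (Fin v) × L.Term (Fin v))) (n : ℕ) : ℕ :=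
  sSup { k : ℕ | ∃ M : L.Structure (Fin n), k = solCount L v Γ n M }

/-!
Terms are evaluated coordinatewise in a direct product, so a solution in `M × N` is the same thing
as a solution in `M` together with a solution in `N`. Take `M` and `N` to be maximizing structures
on `Fin n₁` and `Fin n₂`, and transport their product to `Fin (n₁ * n₂)`.
-/

open FirstOrder.Language

/-- The direct product of two structures: function symbols act coordinatewise, and a relation
holds when it holds in both coordinates. -/
instance prodStructure {L : Language} {M N : Type*} [L.Structure M] [L.Structure N] :
    L.Structure (M × N) where
  funMap f x := (Structure.funMap f (Prod.fst ∘ x), Structure.funMap f (Prod.snd ∘ x))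
  RelMap r x := Structure.RelMap r (Prod.fst ∘ x) ∧ Structure.RelMap r (Prod.snd ∘ x)

/-- The set of assignments in `M` at which every equation of `Γ` holds, the pair `(s, t)` standing
for the equation `s = t`. -/
def solutionSet {L : Language} {α : Type*} (Γ : Set (L.Term α × L.Term α)) (M : Type*)
    [L.Structure M] : Set (α → M) :=
  {a | ∀ p ∈ Γ, p.1.realize a = p.2.realize a}

section SolutionSet

variable {L : Language} {α M N : Type*} [L.Structure M] [L.Structure N]

theorem mem_solutionSet {Γ : Set (L.Term α × L.Term α)} {a : α → M} :
    a ∈ solutionSet Γ M ↔ ∀ p ∈ Γ, p.1.realize a = p.2.realize a :=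
  Iff.rfl

theorem realize_prod (t : L.Term α) (a : α → M × N) :
    t.realize a = (t.realize (Prod.fst ∘ a), t.realize (Prod.snd ∘ a)) := by
  induction t with
  | var i => rfl
  | func f ts ih =>
    simp only [Term.realize_func, ih]
    rfl

theorem mem_solutionSet_prod {Γ : Set (L.Term α × L.Term α)} {a : α → M × N} :
    a ∈ solutionSet Γ (M × N) ↔
      Prod.fst ∘ a ∈ solutionSet Γ M ∧ Prod.snd ∘ a ∈ solutionSet Γ N := by
  simp only [mem_solutionSet, realize_prod, Prod.mk.injEq, imp_and, forall_and]

theorem card_solutionSet_prod (Γ : Set (L.Term α × L.Term α)) :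
    Nat.card (solutionSet Γ (M × N)) =
      Nat.card (solutionSet Γ M) * Nat.card (solutionSet Γ N) := by
  rw [← Nat.card_prod]
  exact Nat.card_congr <|
    ((Equiv.arrowProdEquivProdArrow α (fun _ ↦ M) (fun _ ↦ N)).subtypeEquiv
      fun _ ↦ mem_solutionSet_prod).trans (Equiv.Set.prod _ _)

theorem comp_mem_solutionSet_iff_of_injective {Γ : Set (L.Term α × L.Term α)} {g : M →[L] N}
    (hg : Function.Injective g) {a : α → M} :
    g ∘ a ∈ solutionSet Γ N ↔ a ∈ solutionSet Γ M := by
  simp only [mem_solutionSet, HomClass.realize_term, hg.eq_iff]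

theorem card_solutionSet_congr (Γ : Set (L.Term α × L.Term α)) (e : M ≃[L] N) :
    Nat.card (solutionSet Γ M) = Nat.card (solutionSet Γ N) :=
  Nat.card_congr <| ((Equiv.refl α).arrowCongr e.toEquiv).subtypeEquiv
    fun _ ↦ (comp_mem_solutionSet_iff_of_injective (g := e.toHom) e.injective).symm

end SolutionSet

section MaxSol

variable {L : Language} {v n : ℕ} (Γ : Finset (L.Term (Fin v) × L.Term (Fin v)))

theorem bddAbove_solCount :
    BddAbove {k : ℕ | ∃ M : L.Structure (Fin n), k = solCount L v Γ n M} := by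
  refine ⟨Nat.card (Fin v → Fin n), ?_⟩
  rintro _ ⟨_, rfl⟩
  exact Finite.card_subtype_le _

theorem solCount_eq_card_solutionSet [M : L.Structure (Fin n)] :
    solCount L v Γ n M = Nat.card (solutionSet (L := L) (α := Fin v) Γ (Fin n)) :=
  rfl

theorem exists_maxSol_eq_card_solutionSet [NeZero n] :
    ∃ _ : L.Structure (Fin n),
      maxSol L v Γ n = Nat.card (solutionSet (L := L) (α := Fin v) Γ (Fin n)) := by
  obtain ⟨M, hM⟩ : ∃ M : L.Structure (Fin n), maxSol L v Γ n = solCount L v Γ n M :=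
    Nat.sSup_mem (s := {k | ∃ M, k = solCount L v Γ n M})
      ⟨_, Inhabited.trivialStructure L, rfl⟩ (bddAbove_solCount Γ)
  exact ⟨M, hM.trans (solCount_eq_card_solutionSet Γ)⟩

theorem card_solutionSet_le_maxSol {M : Type*} [L.Structure M] (e : M ≃ Fin n) :
    Nat.card (solutionSet (L := L) (α := Fin v) Γ M) ≤ maxSol L v Γ n := by
  let _ : L.Structure (Fin n) := e.inducedStructure
  calc Nat.card (solutionSet (L := L) (α := Fin v) Γ M)
      = Nat.card (solutionSet (L := L) (α := Fin v) Γ (Fin n)) :=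
        card_solutionSet_congr _ e.inducedStructureEquiv
    _ = solCount L v Γ n e.inducedStructure := (solCount_eq_card_solutionSet Γ).symm
    _ ≤ maxSol L v Γ n := le_csSup (bddAbove_solCount Γ) ⟨_, rfl⟩

end MaxSol

/-- Supermultiplicativity of the maximum number of solutions of a system of
term equations: `S (n₁ * n₂) ≥ S n₁ * S n₂` for all `n₁, n₂ ≥ 1`. -/
theorem maxSol_supermultiplicative (L : FirstOrder.Language) (v : ℕ)
    (Γ : Finset (L.Term (Fin v) × L.Term (Fin v)))
    (n₁ n₂ : ℕ) (h₁ : 1 ≤ n₁) (h₂ : 1 ≤ n₂) :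
    maxSol L v Γ n₁ * maxSol L v Γ n₂ ≤ maxSol L v Γ (n₁ * n₂) := by
  have : NeZero n₁ := .of_pos h₁
  have : NeZero n₂ := .of_pos h₂
  obtain ⟨_, hM₁⟩ := exists_maxSol_eq_card_solutionSet (n := n₁) Γ
  obtain ⟨_, hM₂⟩ := exists_maxSol_eq_card_solutionSet (n := n₂) Γ
  calc maxSol L v Γ n₁ * maxSol L v Γ n₂
      = Nat.card (solutionSet (L := L) (α := Fin v) Γ (Fin n₁ × Fin n₂)) := by
        rw [hM₁, hM₂, card_solutionSet_prod]
    _ ≤ maxSol L v Γ (n₁ * n₂) := card_solutionSet_le_maxSol Γ finProdFinEquiv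
end

section
/- Let S : ℕ → ℕ be monotone nondecreasing with S(n) ≥ 1 for all n ≥ 1, supermultiplicative in the sense that S(n · m) ≥ S(n) · S(m) for all n, m ≥ 1, and polynomially bounded, i.e., there exists v ∈ ℕ with S(n) ≤ n^v for all n ≥ 1. Then the limit of log(S(n)) / log(n) as n → ∞ exists, is finite (at most v), and equals the supremum over n ≥ 2 of log(S(n)) / log(n). -/
/-!
Pass to `f = log ∘ S`, which is monotone and satisfies `f m + f n ≤ f (m * n)`. For fixed `m ≥ 2`,
squeeze `n` between consecutive powers `m ^ k ≤ n < m ^ (k + 1)`: then `f n ≥ f (m ^ k) ≥ k * f m`,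
where `k` differs from `log n / log m` by less than one. Dividing by `log n`, the exponent at `n`
is at least the exponent at `m` up to an error `|f m| / log n → 0`. So every exponent is an
asymptotic lower bound, which forces convergence to the supremum.
-/

open Filter Topology

theorem tendsto_of_isLUB_image {ι α : Type*} [LinearOrder α] [TopologicalSpace α]
    [OrderTopology α] {l : Filter ι} {u : ι → α} {s : Set ι} {L : α} (hL : IsLUB (u '' s) L)
    (hs : ∀ᶠ i in l, i ∈ s) (hlower : ∀ j ∈ s, ∀ a < u j, ∀ᶠ i in l, a < u i) :
    Tendsto u l (𝓝 L) := by
  refine tendsto_order.2 ⟨fun a ha ↦ ?_, fun a ha ↦ ?_⟩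
  · obtain ⟨_, ⟨j, hj, rfl⟩, haj⟩ := (lt_isLUB_iff hL).1 ha
    exact hlower j hj a haj
  · exact hs.mono fun i hi ↦ (hL.1 (Set.mem_image_of_mem u hi)).trans_lt ha

theorem nsmul_le_apply_pow_of_add_le_apply_mul {M : Type*} [AddCommMonoid M] [Preorder M]
    [AddRightMono M] {f : ℕ → M} (hsuper : ∀ m n, 1 ≤ m → 1 ≤ n → f m + f n ≤ f (m * n))
    {m k : ℕ} (hm : 1 ≤ m) (hk : 1 ≤ k) : k • f m ≤ f (m ^ k) := by
  induction k, hk using Nat.le_induction with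
  | base => simp
  | succ k _ ih =>
    calc (k + 1) • f m = k • f m + f m := succ_nsmul _ _
      _ ≤ f (m ^ k) + f m := by gcongr
      _ ≤ f (m ^ (k + 1)) := hsuper _ _ (Nat.one_le_pow _ _ hm) hm

section LogSuperadditive

variable {f : ℕ → ℝ} {m : ℕ}

theorem mul_logb_sub_abs_le_apply (hmono : MonotoneOn f (Set.Ici 1))
    (hsuper : ∀ m n, 1 ≤ m → 1 ≤ n → f m + f n ≤ f (m * n)) (hm : 2 ≤ m) {n : ℕ} (hmn : m ≤ n) :
    f m * Real.logb m n - |f m| ≤ f n := by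
  have hm_one : 1 ≤ m := one_le_two.trans hm
  set k := Nat.log m n
  have hk_floor : ⌊Real.logb m n⌋₊ = k := Real.natFloor_logb_natCast m n
  have hlogb_nonneg : 0 ≤ Real.logb m n :=
    Real.logb_nonneg (by exact_mod_cast hm) (by exact_mod_cast hm_one.trans hmn)
  have hk_le : (k : ℝ) ≤ Real.logb m n := hk_floor ▸ Nat.floor_le hlogb_nonneg
  have hlogb_lt : Real.logb m n < k + 1 := hk_floor ▸ Nat.lt_floor_add_one _
  have hpow_le : m ^ k ≤ n := Nat.pow_log_le_self m (by lia)
  have hfract : f m * (Real.logb m n - k) ≤ |f m| :=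
    calc f m * (Real.logb m n - k) ≤ |f m| * (Real.logb m n - k) :=
          mul_le_mul_of_nonneg_right (le_abs_self _) (sub_nonneg.2 hk_le)
      _ ≤ |f m| := mul_le_of_le_one_right (abs_nonneg _) (by linarith)
  calc f m * Real.logb m n - |f m| ≤ k • f m := by rw [nsmul_eq_mul]; linarith
    _ ≤ f (m ^ k) := nsmul_le_apply_pow_of_add_le_apply_mul hsuper hm_one
        (Nat.log_pos hm hmn)
    _ ≤ f n := hmono (Nat.one_le_pow _ _ hm_one) (hm_one.trans hmn) hpow_le

theorem eventually_lt_div_log (hmono : MonotoneOn f (Set.Ici 1))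
    (hsuper : ∀ m n, 1 ≤ m → 1 ≤ n → f m + f n ≤ f (m * n)) (hm : 2 ≤ m) {a : ℝ}
    (ha : a < f m / Real.log m) : ∀ᶠ n : ℕ in atTop, a < f n / Real.log n := by
  have herror : Tendsto (fun n : ℕ ↦ |f m| / Real.log n) atTop (𝓝 0) :=
    (Real.tendsto_log_atTop.comp tendsto_natCast_atTop_atTop).const_div_atTop _
  filter_upwards [herror.eventually_lt_const (sub_pos.2 ha), eventually_ge_atTop m] with n hn hmn
  have hlog_pos : 0 < Real.log n := Real.log_pos (by exact_mod_cast hm.trans hmn)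
  calc a < f m / Real.log m - |f m| / Real.log n := by linarith
    _ = (f m * Real.logb m n - |f m|) / Real.log n := by rw [Real.logb]; field_simp
    _ ≤ f n / Real.log n := by gcongr; exact mul_logb_sub_abs_le_apply hmono hsuper hm hmn

theorem tendsto_div_log_of_isLUB (hmono : MonotoneOn f (Set.Ici 1))
    (hsuper : ∀ m n, 1 ≤ m → 1 ≤ n → f m + f n ≤ f (m * n)) {L : ℝ}
    (hL : IsLUB ((fun n : ℕ ↦ f n / Real.log n) '' Set.Ici 2) L) :
    Tendsto (fun n : ℕ ↦ f n / Real.log n) atTop (𝓝 L) :=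
  tendsto_of_isLUB_image hL (eventually_ge_atTop 2) fun _ hm _ ha ↦
    eventually_lt_div_log hmono hsuper hm ha

end LogSuperadditive

theorem log_div_log_le_of_le_rpow {x y v : ℝ} (hx : 1 < x) (hy : 0 < y) (hyx : y ≤ x ^ v) :
    Real.log y / Real.log x ≤ v :=
  (Real.log_div_log (x := y) (b := x)).trans_le ((Real.logb_le_iff_le_rpow hx hy).2 hyx)

theorem fekete_normalised_exponent_general (S : ℕ → ℝ) (v : ℝ)
    (hmono : MonotoneOn S (Set.Ici 1))
    (hpos : ∀ n, 1 ≤ n → 0 < S n)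
    (hsuper : ∀ n m, 1 ≤ n → 1 ≤ m → S n * S m ≤ S (n * m))
    (hpoly : ∀ n : ℕ, 1 ≤ n → S n ≤ (n : ℝ) ^ v) :
    ∃ L : ℝ, L ≤ v ∧
      L = sSup { x : ℝ | ∃ n : ℕ, 2 ≤ n ∧ x = Real.log (S n) / Real.log n } ∧
      Tendsto (fun n : ℕ ↦ Real.log (S n) / Real.log n) atTop (𝓝 L) := by
  have hlog_mono : MonotoneOn (fun n ↦ Real.log (S n)) (Set.Ici 1) := fun m hm n hn hmn ↦
    Real.log_le_log (hpos m hm) (hmono hm hn hmn)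
  have hlog_super (m n : ℕ) (hm : 1 ≤ m) (hn : 1 ≤ n) :
      Real.log (S m) + Real.log (S n) ≤ Real.log (S (m * n)) := by
    rw [← Real.log_mul (hpos m hm).ne' (hpos n hn).ne']
    exact Real.log_le_log (mul_pos (hpos m hm) (hpos n hn)) (hsuper m n hm hn)
  set E : Set ℝ := (fun n : ℕ ↦ Real.log (S n) / Real.log n) '' Set.Ici 2
  have hE_nonempty : E.Nonempty := Set.nonempty_Ici.image _
  have hE_le : v ∈ upperBounds E := by
    rintro _ ⟨n, hn : 2 ≤ n, rfl⟩
    have hn_one : 1 ≤ n := one_le_two.trans hn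
    exact log_div_log_le_of_le_rpow (by exact_mod_cast hn) (hpos n hn_one) (hpoly n hn_one)
  refine ⟨sSup E, csSup_le hE_nonempty hE_le, ?_, ?_⟩
  · simp only [E, Set.image, Set.mem_Ici, eq_comm]
  · exact tendsto_div_log_of_isLUB hlog_mono hlog_super (isLUB_csSup hE_nonempty ⟨v, hE_le⟩)

/-- Fekete-type convergence for the normalised exponent: if `S : ℕ → ℕ` is
monotone, positive on `n ≥ 1`, supermultiplicative, and bounded by `n ^ v`,
then `log (S n) / log n` converges as `n → ∞` to a finite limit `L ≤ v`, which
equals the supremum over `n ≥ 2` of `log (S n) / log n`. -/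
theorem fekete_normalised_exponent (S : ℕ → ℕ) (v : ℕ)
    (hmono : Monotone S)
    (hpos : ∀ n, 1 ≤ n → 1 ≤ S n)
    (hsuper : ∀ n m, 1 ≤ n → 1 ≤ m → S n * S m ≤ S (n * m))
    (hpoly : ∀ n, 1 ≤ n → S n ≤ n ^ v) :
    ∃ L : ℝ, L ≤ (v : ℝ) ∧
      L = sSup { x : ℝ | ∃ n : ℕ, 2 ≤ n ∧ x = Real.log (S n) / Real.log n } ∧
      Filter.Tendsto (fun n : ℕ => Real.log (S n) / Real.log n)
        Filter.atTop (nhds L) := by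
  exact fekete_normalised_exponent_general (fun n ↦ S n) v
    ((Nat.mono_cast.comp hmono).monotoneOn _) (by exact_mod_cast hpos)
    (by exact_mod_cast hsuper) (by exact_mod_cast hpoly)
end

section
/- Let A be a finite set and let G : ZMod 5 → (A × A → A) be any deterministic guessing strategy on the bidirected 5-cycle, where at vertex i the guess depends on the values at vertices i−1 and i+1. Let Fix(G) = { a : ZMod 5 → A | for every i, a i = G i (a (i−1), a (i+1)) } be the set of correctly guessed configurations. Then (card Fix(G))² ≤ (card A)⁵; equivalently, the number of correctly guessed configurations is at most |A|^{5/2}. -/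
/-!
All values around the cycle follow from those at `0, 1, 3`, and likewise from those at `0, 1, 2, 4`.
Moreover the values at `0, 1` follow from those at `0, 2` (through the guess at `1`), and also from
those at `1, 4` (through the guess at `0`). So a fibre over a pair of values at `0, 1` has at most
`|A₃|` elements, and at most `P * Q`, where `P` and `Q` count the pairs of values that its elements
take at `0, 2` and at `1, 4`. Different fibres have different such pairs, so `P` and `Q` sum to at
most `|A₀| * |A₂|` and `|A₁| * |A₄|`, and the bound follows from the Cauchy–Schwarz inequality.
-/

open Function
open scoped Finset

section Counting

variable {X Y Z E T : Type*} {τ : X → T} {p : X → Y} {q : X → Z} {r : X → E}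

theorem sum_card_image_fiber_le_card [Fintype X] [Fintype Y] [DecidableEq Y] [DecidableEq T]
    (hp : τ.FactorsThrough p) (s : Finset T) :
    ∑ t ∈ s, #(({x | τ x = t} : Finset X).image p) ≤ Fintype.card Y := by
  rw [← Finset.card_biUnion]
  · exact Finset.card_le_univ _
  · intro t _ t' _ htt'
    refine Finset.disjoint_left.2 fun y hy hy' => ?_
    simp only [Finset.mem_image, Finset.mem_filter_univ] at hy hy'
    obtain ⟨x, rfl, hxy⟩ := hy
    obtain ⟨x', rfl, hxy'⟩ := hy'
    exact htt' (hp (hxy.trans hxy'.symm))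

theorem card_le_card_image_mul_card_image [DecidableEq Y] [DecidableEq Z] {s : Finset X}
    (hpq : Set.InjOn (fun x => (p x, q x)) s) : #s ≤ #(s.image p) * #(s.image q) := by
  rw [← Finset.card_product]
  exact Finset.card_le_card_of_injOn _ (fun _ hx => Finset.mem_product.2
    ⟨Finset.mem_image_of_mem p hx, Finset.mem_image_of_mem q hx⟩) hpq

theorem card_fiber_le_card_of_injective_pair [Fintype X] [Fintype E] [DecidableEq T]
    (hr : Injective fun x => (τ x, r x)) (t : T) : #{x | τ x = t} ≤ Fintype.card E := by
  refine Finset.card_le_card_of_injOn r (fun _ _ => Finset.mem_univ _) fun x hx x' hx' hxx' => ?_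
  have hτ : τ x = τ x' :=
    (Finset.mem_filter_univ x |>.1 hx).trans (Finset.mem_filter_univ x' |>.1 hx').symm
  exact hr (Prod.ext hτ hxx')

-- The counting form of the sum of the entropy inequalities `H(X) + H(τ) ≤ H(p) + H(q)`
-- (submodularity) and `H(X) ≤ H(τ) + H(r)`.
theorem natCard_sq_le_mul_of_factorsThrough [Finite Y] [Finite Z] [Finite E]
    (hp : τ.FactorsThrough p) (hq : τ.FactorsThrough q) (hpq : Injective fun x => (p x, q x))
    (hr : Injective fun x => (τ x, r x)) :
    Nat.card X ^ 2 ≤ Nat.card Y * Nat.card Z * Nat.card E := by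
  classical
  have := Finite.of_injective _ hpq
  cases nonempty_fintype X
  cases nonempty_fintype Y
  cases nonempty_fintype Z
  cases nonempty_fintype E
  simp only [Nat.card_eq_fintype_card]
  let fiber (t : T) : Finset X := {x | τ x = t}
  let s : Finset T := Finset.univ.image τ
  have hX : Fintype.card X = ∑ t ∈ s, #(fiber t) :=
    Finset.card_eq_sum_card_image τ Finset.univ
  have hfiber (t : T) : #(fiber t) ^ 2 ≤
      #((fiber t).image p) * (#((fiber t).image q) * Fintype.card E) := by
    rw [sq, ← mul_assoc]
    exact Nat.mul_le_mul (card_le_card_image_mul_card_image hpq.injOn)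
      (card_fiber_le_card_of_injective_pair hr t)
  calc Fintype.card X ^ 2
      = (∑ t ∈ s, #(fiber t)) ^ 2 := by rw [hX]
    _ ≤ (∑ t ∈ s, #((fiber t).image p)) *
          ∑ t ∈ s, #((fiber t).image q) * Fintype.card E :=
        Finset.sum_sq_le_sum_mul_sum_of_sq_le_mul s (fun _ _ => Nat.zero_le _)
          (fun _ _ => Nat.zero_le _) fun t _ => hfiber t
    _ = (∑ t ∈ s, #((fiber t).image p)) * (∑ t ∈ s, #((fiber t).image q)) *
          Fintype.card E := by
        rw [← Finset.sum_mul, mul_assoc]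
    _ ≤ Fintype.card Y * Fintype.card Z * Fintype.card E := by
        gcongr
        · exact sum_card_image_fiber_le_card hp s
        · exact sum_card_image_fiber_le_card hq s

end Counting

section Cycle

variable {n : ℕ} {A : ZMod n → Type*}

/-- The set `Fix(G)` of configurations on the bidirected `n`-cycle that the strategy `G` guesses
correctly at every vertex. The alphabet `A i` may depend on the vertex `i`. -/
def correctConfigs (G : ∀ i, A (i - 1) × A (i + 1) → A i) : Set (∀ i, A i) :=
  {a | ∀ i, a i = G i (a (i - 1), a (i + 1))}

theorem correctConfigs.apply_eq_of_neighbors_eq {G : ∀ i, A (i - 1) × A (i + 1) → A i}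
    (a b : correctConfigs G) (i : ZMod n) (hpred : a.1 (i - 1) = b.1 (i - 1))
    (hsucc : a.1 (i + 1) = b.1 (i + 1)) : a.1 i = b.1 i := by
  rw [a.2 i, b.2 i, hpred, hsucc]

end Cycle

theorem c5_guessing_upper_bound_general {A : ZMod 5 → Type*} [∀ i, Finite (A i)]
    (G : ∀ i, A (i - 1) × A (i + 1) → A i) :
    Nat.card (correctConfigs G) ^ 2 ≤ ∏ i, Nat.card (A i) := by
  have guess := correctConfigs.apply_eq_of_neighbors_eq (G := G)
  have eq_of_apply_eq (a b : correctConfigs G) (h₀ : a.1 0 = b.1 0) (h₁ : a.1 1 = b.1 1)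
      (h₂ : a.1 2 = b.1 2) (h₃ : a.1 3 = b.1 3) (h₄ : a.1 4 = b.1 4) : a = b := by
    ext i
    fin_cases i <;> assumption
  have key : Nat.card (correctConfigs G) ^ 2 ≤
      Nat.card (A 0 × A 2) * Nat.card (A 1 × A 4) * Nat.card (A 3) := by
    apply natCard_sq_le_mul_of_factorsThrough
      (τ := fun a : correctConfigs G => (a.1 0, a.1 1)) (p := fun a => (a.1 0, a.1 2))
      (q := fun a => (a.1 1, a.1 4)) (r := fun a => a.1 3)
    · intro a b h
      obtain ⟨h₀, h₂⟩ := Prod.ext_iff.1 h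
      exact Prod.ext h₀ (guess a b 1 h₀ h₂)
    · intro a b h
      obtain ⟨h₁, h₄⟩ := Prod.ext_iff.1 h
      exact Prod.ext (guess a b 0 h₄ h₁) h₁
    · intro a b h
      simp only [Prod.mk.injEq] at h
      obtain ⟨⟨h₀, h₂⟩, h₁, h₄⟩ := h
      exact eq_of_apply_eq a b h₀ h₁ h₂ (guess a b 3 h₂ h₄) h₄
    · intro a b h
      simp only [Prod.mk.injEq] at h
      obtain ⟨⟨h₀, h₁⟩, h₃⟩ := h
      exact eq_of_apply_eq a b h₀ h₁ (guess a b 2 h₁ h₃) h₃ (guess a b 4 h₃ h₀)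
  calc Nat.card (correctConfigs G) ^ 2
      ≤ Nat.card (A 0 × A 2) * Nat.card (A 1 × A 4) * Nat.card (A 3) := key
    _ = Nat.card (A 0) * Nat.card (A 1) * Nat.card (A 2) * Nat.card (A 3) * Nat.card (A 4) := by
        simp only [Nat.card_prod]
        ring
    _ = ∏ i, Nat.card (A i) := (Fin.prod_univ_five fun i => Nat.card (A i)).symm

/-- Upper bound for the guessing game on the bidirected 5-cycle: for any
deterministic strategy `G`, the number of correctly guessed configurations
squared is at most `|A|^5`, i.e. the number of correctly guessed
configurations is at most `|A|^(5/2)`. -/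
theorem c5_guessing_upper_bound (A : Type*) [Fintype A]
    (G : ZMod 5 → (A × A → A)) :
    (Nat.card { a : ZMod 5 → A // ∀ i, a i = G i (a (i - 1), a (i + 1)) }) ^ 2
      ≤ (Nat.card A) ^ 5 := by
  simpa only [Finset.prod_const, Finset.card_univ, ZMod.card, correctConfigs, Set.coe_ofPred] using
    c5_guessing_upper_bound_general (A := fun _ => A) G
end

section
/- Let B be a finite set with card B = m and let A = B × B, so card A = m². Then there exists a deterministic guessing strategy G : ZMod 5 → (A × A → A) on the bidirected 5-cycle whose set of correctly guessed configurations Fix(G) = { a : ZMod 5 → A | for every i, a i = G i (a (i−1), a (i+1)) } has cardinality exactly m⁵ = (m²)^{5/2}. Concretely, the strategy G i ((u₁,u₂), (w₁,w₂)) = (u₂, w₁), where (u₁,u₂) is the value at vertex i−1 and (w₁,w₂) the value at vertex i+1, achieves this. -/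
/-!
Regard the value `(x, y)` at a vertex as a label `x` for its incoming edge and a label `y` for its
outgoing edge. A configuration is correctly guessed exactly when the two endpoints of every edge
agree on its label, so the correctly guessed configurations correspond to the free labellings of
the edges. There are as many edges as vertices.
-/

universe u v

open Cardinal

/-- The configurations correctly guessed by the strategy `G` in the guessing game over the alphabet
`A` in which each vertex `i` sees its predecessor and its successor. The graph, a disjoint union of
cycles and two-way infinite paths, is encoded by the successor permutation `σ`. -/
def correctlyGuessed {V : Type u} {A : Type v} (σ : Equiv.Perm V) (G : V → A × A → A) :
    Set (V → A) :=
  {a | ∀ i, a i = G i (a (σ.symm i), a (σ i))}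

/-- The strategy over the alphabet `B × B` by which a vertex guesses the half of its value that it
shares with its predecessor, followed by the half that it shares with its successor. -/
def edgeSharingStrategy (V : Type u) (B : Type v) : V → (B × B) × (B × B) → B × B :=
  fun _ p => (p.1.2, p.2.1)

section EdgeSharing

variable {V : Type u} {B : Type v} (σ : Equiv.Perm V)

theorem mem_correctlyGuessed_edgeSharingStrategy_iff {a : V → B × B} :
    a ∈ correctlyGuessed σ (edgeSharingStrategy V B) ↔ ∀ i, (a i).2 = (a (σ i)).1 := by
  refine ⟨fun h i => congrArg Prod.snd (h i), fun h i => Prod.ext ?_ (h i)⟩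
  have h_pred : (a (σ.symm i)).2 = (a (σ (σ.symm i))).1 := h (σ.symm i)
  rw [σ.apply_symm_apply] at h_pred
  exact h_pred.symm

/-- Correctly guessed configurations of the edge-sharing strategy as labellings of the edges, the
edge from `σ.symm i` to `i` being indexed by `i`. -/
def correctlyGuessedEdgeSharingEquiv :
    correctlyGuessed σ (edgeSharingStrategy V B) ≃ (V → B) where
  toFun a i := (a.1 i).1
  invFun x := ⟨fun i => (x i, x (σ i)),
    (mem_correctlyGuessed_edgeSharingStrategy_iff σ).2 fun _ => rfl⟩
  left_inv a := Subtype.ext <| funext fun i =>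
    Prod.ext rfl ((mem_correctlyGuessed_edgeSharingStrategy_iff σ).1 a.2 i).symm
  right_inv _ := rfl

theorem c5_guessing_achievability_general :
    #(correctlyGuessed σ (edgeSharingStrategy V B)) = lift.{u} #B ^ lift.{v} #V :=
  (mk_congr (correctlyGuessedEdgeSharingEquiv σ)).trans (mk_arrow V B)

end EdgeSharing

/-- Achievability for the guessing game on the bidirected 5-cycle: over the
alphabet `A = B × B` with `|B| = m`, the strategy
`G i ((u₁,u₂),(w₁,w₂)) = (u₂, w₁)` has exactly `m^5 = (m^2)^(5/2)` correctly
guessed configurations. -/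
theorem c5_guessing_achievability (B : Type*) [Fintype B] (m : ℕ)
    (hm : Fintype.card B = m) :
    ∃ G : ZMod 5 → ((B × B) × (B × B) → B × B),
      (∀ i (u w : B × B), G i (u, w) = (u.2, w.1)) ∧
      Nat.card { a : ZMod 5 → B × B // ∀ i, a i = G i (a (i - 1), a (i + 1)) }
        = m ^ 5 := by
  refine ⟨edgeSharingStrategy (ZMod 5) B, fun _ _ _ => rfl, ?_⟩
  refine (congrArg toNat (c5_guessing_achievability_general (Equiv.subRight 1).symm)).trans ?_
  simp only [mk_fintype, hm, ZMod.card, lift_natCast, power_natCast, ← Nat.cast_pow, toNat_natCast]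
end

section
/- Let A be a finite set with at least two elements. Then there is no binary operation f : A → A → A satisfying all four identities universally: f (f x y) y = x, f x (f y x) = y, f (f x y) (f y x) = x, and f (f y x) (f x y) = y for all x, y ∈ A. In other words, no self-orthogonal self-decoding Latin square exists on any finite set of size greater than 1. -/
-- `f · x` is an involution and `f x` is a left inverse of it, so the two maps agree.
lemma comm_of_right_involutive_of_left_decoding {A : Type*} {f : A → A → A}
    (right_involutive : ∀ x y, f (f x y) y = x) (left_decoding : ∀ x y, f x (f y x) = y)
    (x y : A) : f x y = f y x :=
  calc
    f x y = f x (f (f y x) x) := by rw [right_involutive]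
    _ = f y x := left_decoding x (f y x)

lemma subsingleton_of_comm_of_self_orthogonal {A : Type*} {f : A → A → A}
    (comm : ∀ x y, f x y = f y x)
    (self_orthogonal : Function.Injective fun p : A × A ↦ (f p.1 p.2, f p.2 p.1)) :
    Subsingleton A := by
  refine ⟨fun x y ↦ ?_⟩
  have swap_eq : (x, y) = (y, x) := self_orthogonal (Prod.ext (comm x y) (comm y x))
  exact congrArg Prod.fst swap_eq

theorem no_self_orthogonal_self_decoding_general (A : Type*) [Nontrivial A] :
    ¬ ∃ f : A → A → A, ∀ x y : A,
        f (f x y) y = x ∧ f x (f y x) = y ∧ f (f x y) (f y x) = x := by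
  rintro ⟨f, hf⟩
  have comm : ∀ x y, f x y = f y x :=
    comm_of_right_involutive_of_left_decoding (fun x y ↦ (hf x y).1) fun x y ↦ (hf x y).2.1
  have pairing_involutive :
      Function.Involutive fun p : A × A ↦ (f p.1 p.2, f p.2 p.1) :=
    fun p ↦ Prod.ext (hf p.1 p.2).2.2 (hf p.2 p.1).2.2
  exact not_subsingleton A
    (subsingleton_of_comm_of_self_orthogonal comm pairing_involutive.injective)

/-- No self-orthogonal self-decoding Latin square exists on any finite set
with at least two elements. -/
theorem no_self_orthogonal_self_decoding (A : Type*) [Finite A]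
    (h : 2 ≤ Nat.card A) :
    ¬ ∃ f : A → A → A, ∀ x y : A,
        f (f x y) y = x ∧ f x (f y x) = y ∧
        f (f x y) (f y x) = x ∧ f (f y x) (f x y) = y := by
  have : Nontrivial A := Finite.one_lt_card_iff_nontrivial.mp h
  exact fun ⟨f, hf⟩ ↦ no_self_orthogonal_self_decoding_general A
    ⟨f, fun x y ↦ ⟨(hf x y).1, (hf x y).2.1, (hf x y).2.2.1⟩⟩
end

section
/- Let A be a finite set. The following are equivalent: (i) there exist functions f, h₁, h₂, h₃, h₄ : A → A → A such that for all x, y ∈ A: h₁ (f x y) y = x, h₂ x (f x y) = y, h₃ (f x y) (f y x) = x, and h₄ (f x y) (f y x) = y; (ii) there exists a self-orthogonal Latin square on A, that is, a binary operation f : A → A → A such that for each fixed y the map x ↦ f x y is a bijection of A, for each fixed x the map y ↦ f x y is a bijection of A, and the map (x, y) ↦ (f x y, f y x) from A × A to A × A is injective. -/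
section Decoders

open Function

variable {α β : Type*}

-- Unlike `Function.injective_iff_hasLeftInverse`, this includes the empty type.
theorem injective_self_iff_hasLeftInverse {g : α → α} : Injective g ↔ HasLeftInverse g := by
  cases isEmpty_or_nonempty α
  · exact ⟨fun _ => ⟨id, isEmptyElim⟩, HasLeftInverse.injective⟩
  · exact injective_iff_hasLeftInverse

theorem exists_right_decoder_iff_injective {f : α → β → β} :
    (∃ h : α → β → β, ∀ x y, h x (f x y) = y) ↔ ∀ x, Injective (f x) := by
  simp only [injective_self_iff_hasLeftInverse, HasLeftInverse, LeftInverse, Classical.skolem]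

theorem exists_left_decoder_iff_injective {f : α → β → α} :
    (∃ h : α → β → α, ∀ x y, h (f x y) y = x) ↔ ∀ y, Injective fun x => f x y := by
  rw [← exists_right_decoder_iff_injective, (Equiv.piComm fun _ _ => α).exists_congr_left]
  exact exists_congr fun _ => forall_comm

theorem exists_pair_decoders_iff_injective {f : α → β → α} {g : α → β → β} :
    (∃ (h : α → β → α) (k : α → β → β), ∀ x y,
        h (f x y) (g x y) = x ∧ k (f x y) (g x y) = y) ↔
      Injective fun p : α × β => (f p.1 p.2, g p.1 p.2) := by
  rw [injective_self_iff_hasLeftInverse]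
  constructor
  · rintro ⟨h, k, decodes⟩
    exact ⟨fun q => (h q.1 q.2, k q.1 q.2), fun p => Prod.ext_iff.mpr (decodes p.1 p.2)⟩
  · rintro ⟨d, decodes⟩
    exact ⟨fun u v => (d (u, v)).1, fun u v => (d (u, v)).2,
      fun x y => Prod.ext_iff.mp (decodes (x, y))⟩

theorem exists_left_right_pair_decoders_iff_injective {f g : α → α → α} :
    (∃ h₁ h₂ h₃ h₄ : α → α → α, ∀ x y,
        h₁ (f x y) y = x ∧ h₂ x (f x y) = y ∧
        h₃ (f x y) (g x y) = x ∧ h₄ (f x y) (g x y) = y) ↔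
      (∀ y, Injective fun x => f x y) ∧ (∀ x, Injective (f x)) ∧
        Injective fun p : α × α => (f p.1 p.2, g p.1 p.2) := by
  rw [← exists_left_decoder_iff_injective, ← exists_right_decoder_iff_injective,
    ← exists_pair_decoders_iff_injective]
  simp only [forall_and, exists_and_left, exists_and_right]

end Decoders

/-- The Term Coding system for self-orthogonal Latin squares is solvable
if and only if a self-orthogonal Latin square on `A` exists. -/
theorem sols_term_coding_iff (A : Type*) [Finite A] :
    (∃ f h₁ h₂ h₃ h₄ : A → A → A, ∀ x y : A,
        h₁ (f x y) y = x ∧ h₂ x (f x y) = y ∧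
        h₃ (f x y) (f y x) = x ∧ h₄ (f x y) (f y x) = y) ↔
    (∃ f : A → A → A,
        (∀ y : A, Function.Bijective fun x => f x y) ∧
        (∀ x : A, Function.Bijective fun y => f x y) ∧
        Function.Injective fun p : A × A => (f p.1 p.2, f p.2 p.1)) := by
  refine exists_congr fun f => ?_
  rw [exists_left_right_pair_decoders_iff_injective (g := fun x y => f y x)]
  exact and_congr (forall_congr' fun _ => Finite.injective_iff_bijective)
    (and_congr_left' (forall_congr' fun _ => Finite.injective_iff_bijective))
end

section
/- Let S : Bool → Bool → Bool satisfy S true true = false. Then the map T : Bool × Bool × Bool → Bool × Bool × Bool defined by T(x, y, z) = (S x x, S true y, S z true) is bijective if and only if S is the NAND function, i.e., S p q = !(p && q) for all p, q ∈ Bool. -/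
open Function

theorem bijective_iff_false_ne_true {f : Bool → Bool} : Bijective f ↔ f false ≠ f true :=
  Finite.injective_iff_bijective.symm.trans Bool.injective_iff

theorem bijective_diag_left_right_iff {α β : Type*} (S : α → α → β) (c : α) :
    Bijective (fun p : α × α × α => (S p.1 p.1, S c p.2.1, S p.2.2 c)) ↔
      Bijective (fun x => S x x) ∧ Bijective (S c) ∧ Bijective (fun z => S z c) := by
  have : Nonempty α := ⟨c⟩
  change Bijective (Prod.map (fun x => S x x) (Prod.map (S c) (fun z => S z c))) ↔ _
  rw [Prod.map_bijective, Prod.map_bijective]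

theorem eq_nand_or_eq_and_iff (S : Bool → Bool → Bool) :
    (∀ p q, S p q = !(p && q)) ∨ (∀ p q, S p q = (p && q)) ↔
      S false false ≠ S true true ∧ S true false ≠ S true true ∧ S false true ≠ S true true := by
  cases h : S true true <;> simp [Bool.forall_bool, h, and_comm, and_assoc]

theorem dispersion_defines_nand_general (S : Bool → Bool → Bool) :
    Bijective (fun p : Bool × Bool × Bool => (S p.1 p.1, S true p.2.1, S p.2.2 true)) ↔
      (∀ p q, S p q = !(p && q)) ∨ (∀ p q, S p q = (p && q)) := by
  rw [bijective_diag_left_right_iff, eq_nand_or_eq_and_iff]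
  simp only [bijective_iff_false_ne_true]

/-- Maximal dispersion defines NAND: given `S true true = false`, the map
`T (x,y,z) = (S x x, S true y, S z true)` on `Bool³` is bijective iff `S` is
the NAND function. -/
theorem dispersion_defines_nand (S : Bool → Bool → Bool)
    (h : S true true = false) :
    Function.Bijective (fun p : Bool × Bool × Bool =>
        (S p.1 p.1, S true p.2.1, S p.2.2 true)) ↔
      (∀ p q : Bool, S p q = !(p && q)) := by
  have S_not_and : ¬ ∀ p q, S p q = (p && q) := fun hS => by simp [hS] at h
  rw [dispersion_defines_nand_general, or_iff_left S_not_and]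
end

section
/- Let t ≥ 1 and let M be a finite type. The following are equivalent: (i) there exists a Steiner system S(t, t+1, |M|) on M, i.e., a finite collection B of subsets of M, each of cardinality t+1, such that every subset of M of cardinality t is contained in exactly one member of B; (ii) there exists a function f : (Fin t → M) → M such that for every injective tuple x : Fin t → M: (symmetry) f (x ∘ σ) = f x for every permutation σ of Fin t; (non-equality) f x ≠ x i for every i; and (inversion) f (Function.update x i (f x)) = x i for every i, where Function.update x i (f x) replaces the i-th entry of x by f x. -/
/-!
Call a point `c` the completion of a `t`-set `s` if `c ∉ s` and `insert c s` is a block. In a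
Steiner system every `t`-set has exactly one completion, and the three axioms on `f` follow from
this uniqueness: permuting a tuple `x` does not change its underlying set, and exchanging `x i`
with `f x` does not change the block `{x₁, …, x_t, f x}`.

Conversely, symmetry and inversion make the points of a block of `f` interchangeable: each of them
is the value of `f` at a tuple enumerating the others. If a block `b` contains the entries of `x`,
apply this to the one remaining point `c` of `b`: by symmetry `f x = c`, so `x` determines `b`.
-/

section SteinerSystem

open Finset Function

variable {ι M : Type*}

/-- `B` is the set of blocks of a Steiner system `S(t, t + 1, n)` on `M`; both `M` and `B` may be
infinite. -/
def IsSteinerSystem (t : ℕ) (B : Set (Finset M)) : Prop :=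
  (∀ b ∈ B, b.card = t + 1) ∧ ∀ s : Finset M, s.card = t → ∃! b, b ∈ B ∧ s ⊆ b

/-- The symmetry, non-equality and inversion axioms for the operation of a Steiner system, imposed
on tuples of distinct points only. The arity is given by an index type `ι`. -/
def IsSteinerFunction [DecidableEq ι] (f : (ι → M) → M) : Prop :=
  ∀ x : ι → M, Injective x →
    (∀ σ : Equiv.Perm ι, f (x ∘ σ) = f x) ∧ (∀ i, f x ≠ x i) ∧
      ∀ i, f (update x i (f x)) = x i

/-- `f` sends each tuple of distinct points to a point that completes it to a block of `B`; its
values at other tuples are arbitrary. -/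
def IsBlockCompletion [Fintype ι] [DecidableEq M] (B : Set (Finset M)) (f : (ι → M) → M) : Prop :=
  ∀ x, Injective x → f x ∉ univ.image x ∧ insert (f x) (univ.image x) ∈ B

/-- The blocks `{x₁, …, x_t, f x}` of the Steiner system associated with the operation `f`. -/
def steinerBlocks [Fintype ι] [DecidableEq M] (f : (ι → M) → M) : Set (Finset M) :=
  {b | ∃ x : ι → M, Injective x ∧ insert (f x) (univ.image x) = b}

theorem injective_update_of_forall_ne [DecidableEq ι] {x : ι → M} (hx : Injective x) {i : ι}
    {z : M} (hz : ∀ j ≠ i, z ≠ x j) : Injective (update x i z) := by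
  intro j k hjk
  grind [update_apply, Injective]

theorem image_update_eq_erase_insert [Fintype ι] [DecidableEq ι] [DecidableEq M] {x : ι → M}
    (hx : Injective x) {i : ι} {z : M} (hz : z ≠ x i) :
    univ.image (update x i z) = (insert z (univ.image x)).erase (x i) := by
  ext a
  simp only [mem_image, mem_univ, true_and, mem_erase, mem_insert]
  constructor
  · rintro ⟨j, rfl⟩
    grind [update_apply, Injective]
  · rintro ⟨hne, rfl | ⟨j, rfl⟩⟩
    · exact ⟨i, update_self i _ x⟩
    · exact ⟨j, update_of_ne (mt (congrArg x) hne) z x⟩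

theorem card_image_univ_of_injective [Fintype ι] [DecidableEq M] {x : ι → M}
    (hx : Injective x) : (univ.image x).card = Fintype.card ι :=
  card_image_of_injective _ hx

theorem exists_perm_comp_eq_of_range_eq {x y : ι → M} (hx : Injective x) (hy : Injective y)
    (h : Set.range x = Set.range y) : ∃ σ : Equiv.Perm ι, x ∘ σ = y :=
  ⟨(Equiv.ofInjective y hy).trans ((Equiv.setCongr h.symm).trans (Equiv.ofInjective x hx).symm),
    funext fun _ => Equiv.apply_ofInjective_symm hx _⟩

namespace IsSteinerSystem

theorem existsUnique_insert_mem [DecidableEq M] {t : ℕ} {B : Set (Finset M)}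
    (hB : IsSteinerSystem t B) {s : Finset M} (hs : s.card = t) :
    ∃! c, c ∉ s ∧ insert c s ∈ B := by
  obtain ⟨b, ⟨hbB, hsb⟩, b_unique⟩ := hB.2 s hs
  obtain ⟨c, hcs, rfl⟩ := exists_eq_insert_iff.2 ⟨hsb, by rw [hB.1 b hbB, hs]⟩
  refine ⟨c, ⟨hcs, hbB⟩, fun d ⟨hds, hdB⟩ => ?_⟩
  exact (insert_inj hds).1 (b_unique _ ⟨hdB, subset_insert d s⟩)

theorem exists_isBlockCompletion [Fintype ι] [DecidableEq M] {B : Set (Finset M)}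
    (hB : IsSteinerSystem (Fintype.card ι) B) :
    ∃ f : (ι → M) → M, IsBlockCompletion B f := by
  have exists_completion (x : ι → M) : ∃ c, Injective x →
      c ∉ univ.image x ∧ insert c (univ.image x) ∈ B := by
    by_cases hx : Injective x
    · obtain ⟨c, hc, -⟩ := hB.existsUnique_insert_mem (card_image_univ_of_injective hx)
      exact ⟨c, fun _ => hc⟩
    · obtain ⟨i, -⟩ := not_forall.1 hx
      exact ⟨x i, fun h => absurd h hx⟩
  choose f hf using exists_completion
  exact ⟨f, hf⟩

theorem isSteinerFunction_of_isBlockCompletion [Fintype ι] [DecidableEq ι] [DecidableEq M]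
    {B : Set (Finset M)} (hB : IsSteinerSystem (Fintype.card ι) B) {f : (ι → M) → M}
    (hf : IsBlockCompletion B f) : IsSteinerFunction f := by
  intro x hx
  have f_unique {y : ι → M} (hy : Injective y) {c : M} (hc : c ∉ univ.image y)
      (hcB : insert c (univ.image y) ∈ B) : f y = c :=
    (hB.existsUnique_insert_mem (card_image_univ_of_injective hy)).unique (hf y hy) ⟨hc, hcB⟩
  have f_ne (i : ι) : f x ≠ x i := fun h => (hf x hx).1 (h ▸ mem_image_of_mem x (mem_univ i))
  refine ⟨fun σ => ?_, f_ne, fun i => ?_⟩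
  · have image_comp : univ.image (x ∘ σ) = univ.image x := by
      rw [← image_image, image_univ_equiv]
    apply f_unique (hx.comp σ.injective) <;> rw [image_comp]
    exacts [(hf x hx).1, (hf x hx).2]
  · have image_update := image_update_eq_erase_insert hx (f_ne i)
    apply f_unique (injective_update_of_forall_ne hx fun j _ => f_ne j) <;> rw [image_update]
    · exact notMem_erase _ _
    · rw [insert_erase (by simp)]
      exact (hf x hx).2

end IsSteinerSystem

namespace IsSteinerFunction

variable [Fintype ι] [DecidableEq ι] [DecidableEq M] {f : (ι → M) → M}

theorem notMem_image (hf : IsSteinerFunction f) {x : ι → M} (hx : Injective x) :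
    f x ∉ univ.image x := by
  simpa only [mem_image, mem_univ, true_and, not_exists, eq_comm, ne_eq] using (hf x hx).2.1

theorem card_of_mem_steinerBlocks (hf : IsSteinerFunction f) {b : Finset M}
    (hb : b ∈ steinerBlocks f) : b.card = Fintype.card ι + 1 := by
  obtain ⟨x, hx, rfl⟩ := hb
  rw [card_insert_of_notMem (hf.notMem_image hx), card_image_univ_of_injective hx]

theorem apply_eq_of_image_eq (hf : IsSteinerFunction f) {x y : ι → M}
    (hx : Injective x) (hy : Injective y) (h : univ.image x = univ.image y) : f x = f y := by
  have range_eq : Set.range x = Set.range y := by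
    simpa only [coe_image, coe_univ, Set.image_univ] using congrArg SetLike.coe h
  obtain ⟨σ, rfl⟩ := exists_perm_comp_eq_of_range_eq hx hy range_eq
  exact ((hf x hx).1 σ).symm

theorem exists_image_eq_erase (hf : IsSteinerFunction f) {b : Finset M}
    (hb : b ∈ steinerBlocks f) {c : M} (hc : c ∈ b) :
    ∃ x : ι → M, Injective x ∧ f x = c ∧ univ.image x = b.erase c := by
  obtain ⟨x, hx, rfl⟩ := hb
  obtain ⟨-, f_ne, inversion⟩ := hf x hx
  rcases mem_insert.1 hc with rfl | hcx
  · exact ⟨x, hx, rfl, (erase_insert (hf.notMem_image hx)).symm⟩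
  · obtain ⟨i, -, rfl⟩ := mem_image.1 hcx
    exact ⟨update x i (f x), injective_update_of_forall_ne hx fun j _ => f_ne j,
      inversion i, image_update_eq_erase_insert hx (f_ne i)⟩

theorem eq_insert_of_image_subset (hf : IsSteinerFunction f) {b : Finset M}
    (hb : b ∈ steinerBlocks f) {x : ι → M} (hx : Injective x)
    (hxb : univ.image x ⊆ b) : b = insert (f x) (univ.image x) := by
  obtain ⟨c, hcx, rfl⟩ : ∃ c ∉ univ.image x, insert c (univ.image x) = b :=
    exists_eq_insert_iff.2
      ⟨hxb, by rw [card_image_univ_of_injective hx, hf.card_of_mem_steinerBlocks hb]⟩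
  obtain ⟨y, hy, rfl, image_y⟩ := hf.exists_image_eq_erase hb (mem_insert_self _ _)
  rw [erase_insert hcx] at image_y
  rw [hf.apply_eq_of_image_eq hy hx image_y]

theorem isSteinerSystem_steinerBlocks (hf : IsSteinerFunction f) :
    IsSteinerSystem (Fintype.card ι) (steinerBlocks f) := by
  refine ⟨fun b hb => hf.card_of_mem_steinerBlocks hb, fun s hs => ?_⟩
  obtain ⟨x, hx, rfl⟩ : ∃ x : ι → M, Injective x ∧ univ.image x = s := by
    obtain ⟨e, he⟩ := Function.Embedding.exists_of_card_eq_finset hs.symm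
    exact ⟨e, e.injective, by rw [← he, map_eq_image]⟩
  exact ⟨insert (f x) (univ.image x), ⟨⟨x, hx, rfl⟩, subset_insert _ _⟩,
    fun b ⟨hb, hxb⟩ => hf.eq_insert_of_image_subset hb hx hxb⟩

end IsSteinerFunction

theorem steiner_system_iff_function_general (ι M : Type*) [Fintype ι] [DecidableEq ι] :
    (∃ B : Set (Finset M), IsSteinerSystem (Fintype.card ι) B) ↔
      ∃ f : (ι → M) → M, IsSteinerFunction f := by
  classical
  constructor
  · rintro ⟨B, hB⟩
    obtain ⟨f, hf⟩ := hB.exists_isBlockCompletion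
    exact ⟨f, hB.isSteinerFunction_of_isBlockCompletion hf⟩
  · rintro ⟨f, hf⟩
    exact ⟨steinerBlocks f, hf.isSteinerSystem_steinerBlocks⟩

end SteinerSystem

/-- Algebraic characterisation of Steiner systems `S(t, t+1, n)`: a Steiner
system on `M` exists iff there is a `t`-ary function `f` satisfying, on every
injective tuple, the symmetry, non-equality and inversion axioms. -/
theorem steiner_system_iff_function (t : ℕ) (ht : 1 ≤ t)
    (M : Type*) [Fintype M] [DecidableEq M] :
    (∃ B : Finset (Finset M),
        (∀ b ∈ B, b.card = t + 1) ∧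
        (∀ s : Finset M, s.card = t → ∃! b, b ∈ B ∧ s ⊆ b)) ↔
    (∃ f : (Fin t → M) → M, ∀ x : Fin t → M, Function.Injective x →
        ((∀ σ : Equiv.Perm (Fin t), f (x ∘ σ) = f x) ∧
         (∀ i : Fin t, f x ≠ x i) ∧
         (∀ i : Fin t, f (Function.update x i (f x)) = x i))) := by
  exact Fintype.finsetEquivSet.surjective.exists.symm.trans
    (Fintype.card_fin t ▸ steiner_system_iff_function_general (Fin t) M)
end

section
/- For a binary operation f : Fin 4 → Fin 4 → Fin 4, let C_f = { (x, y) ∈ Fin 4 × Fin 4 | f x x = x ∧ f x y = f y x ∧ f x (f x y) = y }. Then the maximum of card C_f over all f : Fin 4 → Fin 4 → Fin 4 equals 13; in particular, there exists an idempotent, commutative f for which the inversion identity f x (f x y) = y fails on exactly three ordered pairs (so card C_f = 16 − 3 = 13), and no f attains all 16 pairs (no Steiner quasigroup of order 4 exists). -/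
/-! Let `D` be the set of pairs outside `C_f` and suppose that `n = |P|` is even. If all pairs
`(x, y)` lie in `C_f`, then `f x` is an involution fixing `x`, so by parity it fixes some `y ≠ x`,
and then `(y, x) ∈ D`. Thus every point is a coordinate of a pair in `D`, and `n ≤ 2 |D|`. If
equality holds, the pairs of `D` form a perfect matching of `P`, and `(x, y) ↦ (y, f x y)` is a
fixed-point-free map of order three on the `n (n - 2)` ordered pairs of distinct unmatched points:
the triangles `{x, y, f x y}` decompose the complete graph minus the matching. This is impossible
if `n` is `1` modulo `3`, so `|D| ≥ 3` for `n = 4`. -/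

section SteinerCode

variable {α : Type*} {f : α → α → α} {a b c x y : α}

/-- The code `C_f` of a binary operation: the pairs at which the three identities of a Steiner
quasigroup hold. -/
def steinerCode (f : α → α → α) : Set (α × α) :=
  {p | f p.1 p.1 = p.1 ∧ f p.1 p.2 = f p.2 p.1 ∧ f p.1 (f p.1 p.2) = p.2}

theorem compl_steinerCode_eq_of_idempotent_of_commutative (hidem : ∀ x, f x x = x)
    (hcomm : ∀ x y, f x y = f y x) :
    (steinerCode f)ᶜ = {p | f p.1 (f p.1 p.2) ≠ p.2} := by
  ext p
  simp [steinerCode, hidem p.1, hcomm p.1 p.2]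

theorem swap_notMem_steinerCode_of_apply_eq (hxy : x ≠ y) (hfix : f x y = y) :
    (y, x) ∉ steinerCode f := by
  rintro ⟨hidem : f y y = y, hcomm : f y x = f x y, hinv : f y (f y x) = x⟩
  rw [hcomm, hfix, hidem] at hinv
  exact hxy hinv.symm

theorem apply_apply_of_mem_steinerCode_of_swap_mem (hxy : (x, y) ∈ steinerCode f)
    (hyx : (y, x) ∈ steinerCode f) : f y (f x y) = x := by
  have hcomm : f x y = f y x := hxy.2.1
  exact hcomm ▸ hyx.2.2

variable [Finite α]

theorem ncard_steinerCode_add_ncard_compl (f : α → α → α) :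
    (steinerCode f).ncard + (steinerCode f)ᶜ.ncard = Nat.card α ^ 2 := by
  rw [Set.ncard_add_ncard_compl, Nat.card_prod, sq]

theorem exists_ne_apply_eq_of_forall_mem_steinerCode (hα : Even (Nat.card α))
    (hx : ∀ y, (x, y) ∈ steinerCode f) : ∃ y, x ≠ y ∧ f x y = y := by
  have := Fintype.ofFinite α
  have hinv : Function.Involutive (f x) := fun y => (hx y).2.2
  have hsq : hinv.toPerm ^ 2 ^ 1 = 1 := by
    ext y
    simp [sq, hinv y]
  obtain ⟨y, hfix, hne⟩ := Equiv.Perm.exists_fixed_point_of_prime'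
    (Nat.card_eq_fintype_card (α := α) ▸ hα.two_dvd) hsq (a := x) (hx x).1
  exact ⟨y, hne.symm, hfix⟩

theorem exists_mem_compl_steinerCode (hα : Even (Nat.card α)) (f : α → α → α) (x : α) :
    ∃ p ∈ (steinerCode f)ᶜ, p.1 = x ∨ p.2 = x := by
  by_cases hx : ∀ y, (x, y) ∈ steinerCode f
  · obtain ⟨y, hxy, hfix⟩ := exists_ne_apply_eq_of_forall_mem_steinerCode hα hx
    exact ⟨(y, x), swap_notMem_steinerCode_of_apply_eq hxy hfix, .inr rfl⟩
  · push Not at hx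
    obtain ⟨y, hy⟩ := hx
    exact ⟨(x, y), hy, .inl rfl⟩

/-- The coordinates of the pairs outside `C_f`, listed with multiplicity: `inl p` stands for the
first and `inr p` for the second coordinate of `p`. -/
def defectCoord (f : α → α → α) :
    ((steinerCode f)ᶜ : Set (α × α)) ⊕ ((steinerCode f)ᶜ : Set (α × α)) → α :=
  Sum.elim (fun p => p.1.1) (fun p => p.1.2)

theorem defectCoord_surjective (hα : Even (Nat.card α)) (f : α → α → α) :
    Function.Surjective (defectCoord f) := by
  intro x
  obtain ⟨p, hp, rfl | rfl⟩ := exists_mem_compl_steinerCode hα f x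
  · exact ⟨.inl ⟨p, hp⟩, rfl⟩
  · exact ⟨.inr ⟨p, hp⟩, rfl⟩

theorem card_defectCoord_domain (f : α → α → α) :
    Nat.card (((steinerCode f)ᶜ : Set (α × α)) ⊕ ((steinerCode f)ᶜ : Set (α × α))) =
      2 * (steinerCode f)ᶜ.ncard := by
  rw [Nat.card_sum, Nat.card_coe_set_eq, two_mul]

theorem card_le_two_mul_ncard_compl_steinerCode (hα : Even (Nat.card α)) (f : α → α → α) :
    Nat.card α ≤ 2 * (steinerCode f)ᶜ.ncard :=
  card_defectCoord_domain f ▸ Nat.card_le_card_of_surjective _ (defectCoord_surjective hα f)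

theorem defectCoord_injective_of_card_eq (hf : Nat.card α = 2 * (steinerCode f)ᶜ.ncard) :
    Function.Injective (defectCoord f) :=
  ((Nat.bijective_iff_surjective_and_card _).2
    ⟨defectCoord_surjective (hf ▸ even_two_mul _) f, (card_defectCoord_domain f).trans hf.symm⟩).1

theorem mk_mem_steinerCode_of_notMem (hf : Nat.card α = 2 * (steinerCode f)ᶜ.ncard)
    (hab : (a, b) ∉ steinerCode f) (c : α) : (b, c) ∈ steinerCode f := by
  by_contra hbc
  have hcoord : defectCoord f (.inr ⟨(a, b), hab⟩) = defectCoord f (.inl ⟨(b, c), hbc⟩) := rfl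
  exact Sum.inr_ne_inl (defectCoord_injective_of_card_eq hf hcoord)

theorem eq_of_notMem_steinerCode_of_notMem (hf : Nat.card α = 2 * (steinerCode f)ᶜ.ncard)
    (hac : (a, c) ∉ steinerCode f) (hbc : (b, c) ∉ steinerCode f) : a = b := by
  have hcoord : defectCoord f (.inr ⟨(a, c), hac⟩) = defectCoord f (.inr ⟨(b, c), hbc⟩) := rfl
  simpa using defectCoord_injective_of_card_eq hf hcoord

theorem apply_swap_eq_of_notMem_steinerCode (hf : Nat.card α = 2 * (steinerCode f)ᶜ.ncard)
    (hab : (a, b) ∉ steinerCode f) : f b a = a := by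
  obtain ⟨y, hby, hfix⟩ :=
    exists_ne_apply_eq_of_forall_mem_steinerCode (hf ▸ even_two_mul _)
      (mk_mem_steinerCode_of_notMem hf hab)
  have hya : y = a :=
    eq_of_notMem_steinerCode_of_notMem hf (swap_notMem_steinerCode_of_apply_eq hby hfix) hab
  exact hya ▸ hfix

/-- The ordered pairs of distinct points that are in the code in both orders. When
`|P| = 2 |P² \ C_f|`, these are the edges of the complete graph on `P` outside the perfect matching
formed by the pairs not in `C_f`, in both orientations. -/
def unmatchedPairs (f : α → α → α) : Set (α × α) :=
  {p | p.1 ≠ p.2 ∧ p ∈ steinerCode f ∧ p.swap ∈ steinerCode f}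

theorem ncard_unmatchedPairs_add (hf : Nat.card α = 2 * (steinerCode f)ᶜ.ncard) :
    (unmatchedPairs f).ncard + 2 * Nat.card α = Nat.card α ^ 2 := by
  have hcompl : (unmatchedPairs f)ᶜ =
      Set.diagonal α ∪ ((steinerCode f)ᶜ ∪ Prod.swap '' (steinerCode f)ᶜ) := by
    ext p
    simp only [unmatchedPairs, Set.image_swap_eq_preimage_swap, Set.mem_compl_iff,
      Set.mem_ofPred_eq, Set.mem_union, Set.mem_diagonal_iff, Set.mem_preimage]
    tauto
  have hswap : Disjoint (steinerCode f)ᶜ (Prod.swap '' (steinerCode f)ᶜ) := by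
    rw [Set.disjoint_right]
    rintro _ ⟨⟨a, b⟩, hab, rfl⟩ hba
    exact hba (mk_mem_steinerCode_of_notMem hf hab a)
  have hdiag : Disjoint (Set.diagonal α) ((steinerCode f)ᶜ ∪ Prod.swap '' (steinerCode f)ᶜ) := by
    have hmem (x : α) : (x, x) ∈ steinerCode f :=
      by_contra fun hx => hx (mk_mem_steinerCode_of_notMem hf hx x)
    rw [Set.disjoint_left]
    rintro ⟨x, y⟩ (rfl : x = y)
    simp [hmem]
  have hcard : (Set.diagonal α).ncard = Nat.card α := by
    rw [← Set.range_diag, Set.ncard_range_of_injective fun _ _ h => congrArg Prod.fst h]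
  have hcount : (unmatchedPairs f)ᶜ.ncard = 2 * Nat.card α := by
    rw [hcompl, Set.ncard_union_eq hdiag, Set.ncard_union_eq hswap,
      Set.ncard_image_of_injective _ Prod.swap_injective, hcard]
    lia
  rw [← hcount, Set.ncard_add_ncard_compl, Nat.card_prod, sq]

theorem mk_apply_mem_unmatchedPairs (hf : Nat.card α = 2 * (steinerCode f)ᶜ.ncard)
    (hxy : (x, y) ∈ unmatchedPairs f) : (y, f x y) ∈ unmatchedPairs f := by
  obtain ⟨hne : x ≠ y, hmem : (x, y) ∈ steinerCode f, hyx : (y, x) ∈ steinerCode f⟩ := hxy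
  have hthird : f y (f x y) = x := apply_apply_of_mem_steinerCode_of_swap_mem hmem hyx
  refine ⟨fun h : y = f x y => swap_notMem_steinerCode_of_apply_eq hne h.symm hyx,
    by_contra fun hyz => ?_, by_contra fun hzy => ?_⟩
  · have hzy : (f x y, y) ∈ steinerCode f := mk_mem_steinerCode_of_notMem hf hyz y
    have hcomm' : f (f x y) y = f y (f x y) := hzy.2.1
    rw [apply_swap_eq_of_notMem_steinerCode hf hyz, hthird] at hcomm'
    exact hne hcomm'.symm
  · have hzx : f x y = x := (apply_swap_eq_of_notMem_steinerCode hf hzy).symm.trans hthird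
    have hcomm : f x y = f y x := hmem.2.1
    exact swap_notMem_steinerCode_of_apply_eq hne.symm (hcomm ▸ hzx) hmem

theorem three_dvd_ncard_unmatchedPairs (hf : Nat.card α = 2 * (steinerCode f)ᶜ.ncard) :
    3 ∣ (unmatchedPairs f).ncard := by
  classical
  have := Fintype.ofFinite (unmatchedPairs f)
  let rotate : Function.End (unmatchedPairs f) :=
    fun p => ⟨(p.1.2, f p.1.1 p.1.2), mk_apply_mem_unmatchedPairs hf p.2⟩
  have hrotate : rotate ^ 3 ^ 1 = 1 := by
    funext ⟨⟨x, y⟩, hxy⟩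
    have hyz : (y, f x y) ∈ unmatchedPairs f := mk_apply_mem_unmatchedPairs hf hxy
    have hzx : f y (f x y) = x := apply_apply_of_mem_steinerCode_of_swap_mem hxy.2.1 hxy.2.2
    have hxz : f (f x y) (f y (f x y)) = y :=
      apply_apply_of_mem_steinerCode_of_swap_mem hyz.2.1 hyz.2.2
    exact Subtype.ext (Prod.ext hzx hxz)
  have hfixed : IsEmpty (Function.fixedPoints rotate) :=
    ⟨fun ⟨p, hp⟩ => p.2.1 (congrArg (fun q => q.1.1) hp).symm⟩
  rw [← Nat.card_coe_set_eq, Nat.card_eq_fintype_card, ← Nat.modEq_zero_iff_dvd]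
  simpa only [Fintype.card_eq_zero] using Equiv.Perm.card_fixedPoints_modEq hrotate

theorem card_lt_two_mul_ncard_compl_steinerCode (hα : Even (Nat.card α))
    (hmod : Nat.card α ≡ 1 [MOD 3]) (f : α → α → α) :
    Nat.card α < 2 * (steinerCode f)ᶜ.ncard := by
  refine (card_le_two_mul_ncard_compl_steinerCode hα f).lt_of_ne fun hf => ?_
  have htriangles : (unmatchedPairs f).ncard ≡ 0 [MOD 3] :=
    (three_dvd_ncard_unmatchedPairs hf).modEq_zero_nat
  have hcontra : 0 + 2 * 1 ≡ 1 ^ 2 [MOD 3] :=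
    calc
      0 + 2 * 1 ≡ (unmatchedPairs f).ncard + 2 * Nat.card α [MOD 3] :=
        (htriangles.add (hmod.mul_left 2)).symm
      _ = Nat.card α ^ 2 := ncard_unmatchedPairs_add hf
      _ ≡ 1 ^ 2 [MOD 3] := hmod.pow 2
  exact absurd hcontra (by decide)

end SteinerCode

theorem three_le_ncard_compl_steinerCode_fin_four (f : Fin 4 → Fin 4 → Fin 4) :
    3 ≤ (steinerCode f)ᶜ.ncard := by
  have hlt := card_lt_two_mul_ncard_compl_steinerCode (α := Fin 4)
    (by rw [Nat.card_fin]; decide) (by rw [Nat.card_fin]; decide) f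
  rw [Nat.card_fin] at hlt
  lia

/-- The extremal operation of the paper on `{1, 2, 3, 4}`, with points shifted to `{0, 1, 2, 3}`: an
absorbing point `0` adjoined to the Steiner quasigroup on `{1, 2, 3}`. -/
def extremalOp : Fin 4 → Fin 4 → Fin 4 :=
  ![![0, 0, 0, 0], ![0, 1, 3, 2], ![0, 3, 2, 1], ![0, 2, 1, 3]]

theorem extremalOp_self (x : Fin 4) : extremalOp x x = x := by
  decide +revert

theorem extremalOp_comm (x y : Fin 4) : extremalOp x y = extremalOp y x := by
  decide +revert

theorem extremalOp_apply_apply_ne_iff (x y : Fin 4) :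
    extremalOp x (extremalOp x y) ≠ y ↔ x = 0 ∧ y ≠ 0 := by
  decide +revert

theorem ncard_extremalOp_apply_apply_ne :
    {p : Fin 4 × Fin 4 | extremalOp p.1 (extremalOp p.1 p.2) ≠ p.2}.ncard = 3 := by
  have hprod : {p : Fin 4 × Fin 4 | extremalOp p.1 (extremalOp p.1 p.2) ≠ p.2} =
      {0} ×ˢ {0}ᶜ := by
    ext p
    exact extremalOp_apply_apply_ne_iff p.1 p.2
  rw [hprod, Set.ncard_prod, Set.ncard_singleton, Set.ncard_compl, Set.ncard_singleton,
    Nat.card_fin]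

theorem ncard_steinerCode_extremalOp : (steinerCode extremalOp).ncard = 13 := by
  have hadd := ncard_steinerCode_add_ncard_compl extremalOp
  rw [compl_steinerCode_eq_of_idempotent_of_commutative extremalOp_self extremalOp_comm,
    ncard_extremalOp_apply_apply_ne, Nat.card_fin] at hadd
  lia

/-- For domain size `4`, the maximum of `|C_f|` over all binary operations
`f : Fin 4 → Fin 4 → Fin 4` equals `13`; there is an idempotent commutative
`f` for which inversion fails on exactly three ordered pairs (so
`|C_f| = 16 - 3 = 13`), and no `f` attains all `16` pairs. -/
theorem steiner_code_four :
    IsGreatest { k : ℕ | ∃ f : Fin 4 → Fin 4 → Fin 4,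
        k = Nat.card { p : Fin 4 × Fin 4 //
          f p.1 p.1 = p.1 ∧ f p.1 p.2 = f p.2 p.1 ∧
          f p.1 (f p.1 p.2) = p.2 } } 13 ∧
    (∃ f : Fin 4 → Fin 4 → Fin 4,
        (∀ x, f x x = x) ∧ (∀ x y, f x y = f y x) ∧
        Nat.card { p : Fin 4 × Fin 4 // f p.1 (f p.1 p.2) ≠ p.2 } = 3 ∧
        Nat.card { p : Fin 4 × Fin 4 //
          f p.1 p.1 = p.1 ∧ f p.1 p.2 = f p.2 p.1 ∧
          f p.1 (f p.1 p.2) = p.2 } = 13) ∧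
    ¬ ∃ f : Fin 4 → Fin 4 → Fin 4, ∀ x y : Fin 4,
        f x x = x ∧ f x y = f y x ∧ f x (f x y) = y := by
  refine ⟨⟨⟨extremalOp, ncard_steinerCode_extremalOp.symm⟩, ?_⟩,
    ⟨extremalOp, extremalOp_self, extremalOp_comm, ncard_extremalOp_apply_apply_ne,
      ncard_steinerCode_extremalOp⟩, ?_⟩
  · rintro _ ⟨f, rfl⟩
    change (steinerCode f).ncard ≤ 13
    have hadd := ncard_steinerCode_add_ncard_compl f
    have hdefect := three_le_ncard_compl_steinerCode_fin_four f
    rw [Nat.card_fin] at hadd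
    lia
  · rintro ⟨f, hf⟩
    have hcode : steinerCode f = Set.univ := Set.eq_univ_of_forall fun p => hf p.1 p.2
    simpa [hcode] using three_le_ncard_compl_steinerCode_fin_four f
end
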